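/- For every p > 1 there is a constant K > 0, independent of n, such that ρ(S_q^{n,sa}, S_q^{n,sa}) ≤ K·n^{3/2 + 1/(2p)} for all n ∈ ℕ, where q = 2p/(2p−1). -/

import Mathlib

open scoped BigOperators TensorProduct

/-- The Schatten `p`-norm of a self-adjoint `n × n` complex matrix:
`(∑ |eigenvalues|^p)^{1/p}`. -/
noncomputable def schNorm (p : ℝ) {n : ℕ}
    (A : selfAdjoint (Matrix (Fin n) (Fin n) ℂ)) : ℝ :=
  (∑ i, |Matrix.IsHermitian.eigenvalues
      (A.2 : (A : Matrix (Fin n) (Fin n) ℂ).IsHermitian) i| ^ p) ^ (1/p)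

/-- The projective tensor norm on `S_p^{n,sa} ⊗ S_p^{n,sa}`. -/
noncomputable def projSch (p : ℝ) {n : ℕ}
    (z : TensorProduct ℝ (selfAdjoint (Matrix (Fin n) (Fin n) ℂ))
      (selfAdjoint (Matrix (Fin n) (Fin n) ℂ))) : ℝ :=
  sInf { r : ℝ | ∃ (k : ℕ) (a b : Fin k → selfAdjoint (Matrix (Fin n) (Fin n) ℂ)),
    z = ∑ i, a i ⊗ₜ[ℝ] b i ∧ r = ∑ i, schNorm p (a i) * schNorm p (b i) }

/-- The injective tensor norm on `S_p^{n,sa} ⊗ S_p^{n,sa}`: the supremum of `|(φ ⊗ ψ)(z)|`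
over functionals `φ, ψ` in the unit ball of the dual of `S_p^{n,sa}`. -/
noncomputable def injSch (p : ℝ) {n : ℕ}
    (z : TensorProduct ℝ (selfAdjoint (Matrix (Fin n) (Fin n) ℂ))
      (selfAdjoint (Matrix (Fin n) (Fin n) ℂ))) : ℝ :=
  sSup { r : ℝ | ∃ (φ ψ : selfAdjoint (Matrix (Fin n) (Fin n) ℂ) →ₗ[ℝ] ℝ),
    (∀ x, |φ x| ≤ schNorm p x) ∧ (∀ y, |ψ y| ≤ schNorm p y) ∧
    r = |TensorProduct.lid ℝ ℝ (TensorProduct.map φ ψ z)| }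

/-- `ρ(S_p^{n,sa}, S_p^{n,sa})`: the supremum of the projective norm over tensors of
injective norm at most one. -/
noncomputable def rhoSch (p : ℝ) (n : ℕ) : ℝ :=
  sSup { r : ℝ | ∃ z : TensorProduct ℝ (selfAdjoint (Matrix (Fin n) (Fin n) ℂ))
      (selfAdjoint (Matrix (Fin n) (Fin n) ℂ)),
    injSch p z ≤ 1 ∧ r = projSch p z }

/-! Write `r = 2p` and let `q` be the conjugate exponent. By Hahn–Banach the projective norm of `z`
equals `v z` for a bilinear form `v` with `|v (a, b)| ≤ ‖a‖_q ‖b‖_q`, that is, for a contraction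
`R : S_q → S_r` with `tr (R a · b) = v (a, b)` (`exists_form`, `opv`, `schNorm_le_of_ip_le`). The
matrices `e = ω Eᵢⱼ + ω̄ Eⱼᵢ` with `ω ∈ {1, i}` form a tight frame (`frame`), so
`v z = ¼ ∑ₑ ⟨z, e ⊗ R e⟩` (`apply_eq_sum_tt`).

Split the index pairs `(i, j)` into the graphs of the `n` cyclic shifts. For a fixed shift `σ` and
phase `ω`, the sum `∑ᵢ ⟨z, eᵢ ⊗ R eᵢ⟩` is the average over signs `ε` of `⟨z, X ⊗ R X⟩` with
`X = ∑ᵢ εᵢ eᵢ`, hence at most the average of `‖X‖_r ‖R X‖_r` when the injective norm of `z` is at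
most one. Here `‖X‖_r ≤ 2 n^{1/r}` because the absolute row sums of `X` are at most `2`
(`schNorm_rad_fe_le`), and the average of `‖∑ᵢ εᵢ R eᵢ‖_r` is at most a constant times `√n` since
`S_r` has type `2` and `‖R eᵢ‖_r ≤ ‖eᵢ‖_q ≤ 4`. Summing over the `n` shifts gives
`n · n^{1/r} · n^{1/2}`, as required.

Type `2` (`type_two`) is obtained by comparing traces through the doubly stochastic weights
`|⟨uₖ, vₗ⟩|²` between the eigenbases of two self-adjoint matrices (`wt`, `ip_fc_fc`), which reduces
trace inequalities to scalar ones. With `g x = x |x|^s`, `s = r - 2`, the identity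
`‖Y‖_r^r = tr (Y g(Y))` for `Y = ∑ᵢ εᵢ yᵢ`, a flip of the sign `εᵢ` and the bound
`tr ((A - B) (g(A) - g(B))) ≤ (s + 1) tr ((|A|^s + |B|^s) (A - B)²)` give
`𝔼 ‖Y‖_r^r ≤ 2 (s + 1) ∑ᵢ 𝔼 tr (|Y|^s yᵢ²)`, and Hölder's inequality concludes. -/

/-! ### Functional calculus and coupling of eigenbases -/

/-- The matrix of eigenvectors of `A`. -/
noncomputable def eigMat {n : ℕ} (A : selfAdjoint (Matrix (Fin n) (Fin n) ℂ)) :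
    Matrix (Fin n) (Fin n) ℂ :=
  (Matrix.IsHermitian.eigenvectorUnitary
      (A.2 : (A : Matrix (Fin n) (Fin n) ℂ).IsHermitian) : Matrix (Fin n) (Fin n) ℂ)

/-- The eigenvalues of `A`, in the order used by `schNorm`. -/
noncomputable def eig {n : ℕ} (A : selfAdjoint (Matrix (Fin n) (Fin n) ℂ)) : Fin n → ℝ :=
  Matrix.IsHermitian.eigenvalues (A.2 : (A : Matrix (Fin n) (Fin n) ℂ).IsHermitian)

/-- The functional calculus `f(A)` of a self-adjoint matrix. -/
noncomputable def fc {n : ℕ} (f : ℝ → ℝ) (A : selfAdjoint (Matrix (Fin n) (Fin n) ℂ)) :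
    selfAdjoint (Matrix (Fin n) (Fin n) ℂ) :=
  ⟨eigMat A * Matrix.diagonal (fun i => (f (eig A i) : ℂ)) * star (eigMat A), by
    rw [selfAdjoint.mem_iff]
    simp [Matrix.star_eq_conjTranspose, Matrix.conjTranspose_mul, Matrix.diagonal_conjTranspose,
      Matrix.mul_assoc]
    congr 3
    ext i
    simp⟩

section Coupling
variable {n : ℕ} (A B : selfAdjoint (Matrix (Fin n) (Fin n) ℂ))

lemma star_eigMat_mul : star (eigMat A) * eigMat A = 1 := by
  simp [eigMat]

lemma eigMat_mul_star : eigMat A * star (eigMat A) = 1 := by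
  simp [eigMat]

lemma fc_id : fc (fun x => x) A = A := by
  apply Subtype.ext
  have h := Matrix.IsHermitian.spectral_theorem
    (A.2 : (A : Matrix (Fin n) (Fin n) ℂ).IsHermitian)
  rw [Unitary.conjStarAlgAut_apply] at h
  exact h.symm

lemma fc_one : fc (fun _ => 1) A = 1 := by
  apply Subtype.ext
  simp [fc, eigMat_mul_star]

lemma fc_mul (f g : ℝ → ℝ) :
    (fc f A : Matrix (Fin n) (Fin n) ℂ) * (fc g A : Matrix (Fin n) (Fin n) ℂ)
      = (fc (fun x => f x * g x) A : Matrix (Fin n) (Fin n) ℂ) := by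
  have h := star_eigMat_mul A
  simp only [fc]
  rw [show ∀ P Q : Matrix (Fin n) (Fin n) ℂ,
    eigMat A * P * star (eigMat A) * (eigMat A * Q * star (eigMat A))
      = eigMat A * (P * (star (eigMat A) * eigMat A) * Q) * star (eigMat A) from
      fun P Q => by simp only [Matrix.mul_assoc], h, Matrix.mul_one, Matrix.diagonal_mul_diagonal]
  simp

/-- The real inner product `tr (A B)` on self-adjoint matrices. -/
noncomputable def ip {n : ℕ} : selfAdjoint (Matrix (Fin n) (Fin n) ℂ) →ₗ[ℝ]
    selfAdjoint (Matrix (Fin n) (Fin n) ℂ) →ₗ[ℝ] ℝ :=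
  LinearMap.mk₂ ℝ (fun A B => (Matrix.trace
    ((A : Matrix (Fin n) (Fin n) ℂ) * (B : Matrix (Fin n) (Fin n) ℂ))).re)
    (by intros; simp [Matrix.add_mul]) (by intros; simp)
    (by intros; simp [Matrix.mul_add]) (by intros; simp)

lemma ip_def : ip A B = (Matrix.trace
    ((A : Matrix (Fin n) (Fin n) ℂ) * (B : Matrix (Fin n) (Fin n) ℂ))).re := rfl

lemma ip_comm : ip A B = ip B A := by
  rw [ip_def, ip_def, Matrix.trace_mul_comm]

/-- The doubly stochastic matrix `|⟨uᵢ, vⱼ⟩|²` comparing the eigenbases `u` of `A` and `v`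
of `B`. -/
noncomputable def wt (i j : Fin n) : ℝ := Complex.normSq ((star (eigMat A) * eigMat B) i j)

lemma wt_nonneg (i j : Fin n) : 0 ≤ wt A B i j := Complex.normSq_nonneg _

lemma wt_row (i : Fin n) : ∑ j, wt A B i j = 1 := by
  have h : (star (eigMat A) * eigMat B) * star (star (eigMat A) * eigMat B) = 1 := by
    rw [star_mul, star_star, Matrix.mul_assoc, ← Matrix.mul_assoc (eigMat B), eigMat_mul_star,
      Matrix.one_mul, star_eigMat_mul]
  have h2 := congrFun (congrFun h i) i
  rw [Matrix.mul_apply, Matrix.one_apply_eq] at h2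
  have h3 := congrArg Complex.re h2
  rw [Complex.re_sum, Complex.one_re] at h3
  rw [← h3]
  refine Finset.sum_congr rfl fun j _ => ?_
  rw [Matrix.star_apply, wt, Complex.star_def, Complex.mul_conj, Complex.ofReal_re]

lemma wt_symm (i j : Fin n) : wt A B i j = wt B A j i := by
  rw [wt, wt, ← Complex.normSq_conj]
  congr 1
  rw [← Complex.star_def, ← Matrix.star_apply, star_mul, star_star]

lemma wt_col (j : Fin n) : ∑ i, wt A B i j = 1 := by
  simp_rw [wt_symm A B]
  exact wt_row B A j

lemma ip_fc_fc (f g : ℝ → ℝ) :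
    ip (fc f A) (fc g B) = ∑ i, ∑ j, f (eig A i) * g (eig B j) * wt A B i j := by
  set W := star (eigMat A) * eigMat B with hW
  have h : Matrix.trace ((fc f A : Matrix (Fin n) (Fin n) ℂ) * (fc g B : Matrix (Fin n) (Fin n) ℂ))
      = Matrix.trace ((Matrix.diagonal (fun i => (f (eig A i) : ℂ)) * W) *
        (Matrix.diagonal (fun i => (g (eig B i) : ℂ)) * star W)) := by
    simp only [fc, hW, star_mul, star_star, Matrix.mul_assoc]
    rw [Matrix.trace_mul_comm]
    simp only [Matrix.mul_assoc]
  rw [ip_def, h, Matrix.trace, Complex.re_sum]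
  refine Finset.sum_congr rfl fun i _ => ?_
  rw [Matrix.diag_apply, Matrix.mul_apply, Complex.re_sum]
  refine Finset.sum_congr rfl fun j _ => ?_
  rw [Matrix.diagonal_mul, Matrix.diagonal_mul, Matrix.star_apply, Complex.star_def]
  rw [show ∀ a b c d : ℂ, a * b * (c * d) = a * c * (b * d) by intros; ring, Complex.mul_conj,
    ← Complex.ofReal_mul, ← Complex.ofReal_mul, Complex.ofReal_re]
  rfl

/-- Eigenvectors of `f(A)` and of `A` can overlap only if the eigenvalues correspond. -/
lemma wt_fc (f : ℝ → ℝ) (i j : Fin n) (h : wt A (fc f A) i j ≠ 0) :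
    eig (fc f A) j = f (eig A i) := by
  set B := fc f A with hB
  have e1 : (star (eigMat A) * (B : Matrix (Fin n) (Fin n) ℂ)) * eigMat B =
      Matrix.diagonal (fun i => (f (eig A i) : ℂ)) * (star (eigMat A) * eigMat B) := by
    rw [← Matrix.mul_assoc]
    congr 1
    rw [hB]
    simp only [fc]
    rw [← Matrix.mul_assoc, ← Matrix.mul_assoc, star_eigMat_mul, Matrix.one_mul]
  have e2 : (star (eigMat A) * (B : Matrix (Fin n) (Fin n) ℂ)) * eigMat B =
      (star (eigMat A) * eigMat B) * Matrix.diagonal (fun i => (eig B i : ℂ)) := by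
    have hs : (B : Matrix (Fin n) (Fin n) ℂ) =
        eigMat B * Matrix.diagonal (fun i => (eig B i : ℂ)) * star (eigMat B) :=
      (congrArg Subtype.val (fc_id B)).symm
    have hs' : (B : Matrix (Fin n) (Fin n) ℂ) * eigMat B =
        eigMat B * Matrix.diagonal (fun i => (eig B i : ℂ)) := by
      conv_lhs =>
        enter [1]
        rw [hs]
      rw [Matrix.mul_assoc, star_eigMat_mul, Matrix.mul_one]
    rw [Matrix.mul_assoc, hs', Matrix.mul_assoc]
  have e3 := congrFun (congrFun (e1.symm.trans e2) i) j
  rw [Matrix.diagonal_mul, Matrix.mul_diagonal] at e3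
  have hne : (star (eigMat A) * eigMat B) i j ≠ 0 := by
    intro h0
    apply h
    rw [wt, h0, map_zero]
  rw [mul_comm] at e3
  exact_mod_cast (mul_left_cancel₀ hne e3).symm

lemma sum_eig_fc (f h : ℝ → ℝ) : ∑ j, h (eig (fc f A) j) = ∑ i, h (f (eig A i)) := by
  calc ∑ j, h (eig (fc f A) j) = ∑ j, ∑ i, h (eig (fc f A) j) * wt A (fc f A) i j := by
        simp_rw [← Finset.mul_sum, wt_col, mul_one]
    _ = ∑ j, ∑ i, h (f (eig A i)) * wt A (fc f A) i j := by
        refine Finset.sum_congr rfl fun j _ => Finset.sum_congr rfl fun i _ => ?_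
        by_cases h0 : wt A (fc f A) i j = 0
        · simp [h0]
        · rw [wt_fc A f i j h0]
    _ = ∑ i, h (f (eig A i)) := by
        rw [Finset.sum_comm]
        simp_rw [← Finset.mul_sum, wt_row, mul_one]

lemma fc_smul (c : ℝ) : fc (fun x => c * x) A = c • A := by
  conv_rhs => rw [← fc_id A]
  apply Subtype.ext
  simp only [fc, selfAdjoint.val_smul]
  rw [← Matrix.smul_mul, ← Matrix.mul_smul]
  congr 2
  ext i j
  by_cases hij : i = j <;> simp [hij]

lemma ip_fc_one (f : ℝ → ℝ) : ip (fc f A) 1 = ∑ i, f (eig A i) := by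
  rw [← fc_one A, ip_fc_fc]
  simp_rw [mul_one, ← Finset.mul_sum, wt_row, mul_one]

/-- `tr (f(A) (A - B)²)` in terms of the two spectra. -/
lemma ip_fc_sub_sq (f : ℝ → ℝ) :
    ip (fc f A) (fc (fun x => x ^ 2) (A - B)) =
      ∑ i, ∑ j, f (eig A i) * (eig A i - eig B j) ^ 2 * wt A B i j := by
  have hsq : (fc (fun x => x ^ 2) (A - B) : Matrix (Fin n) (Fin n) ℂ) =
      ((A : Matrix (Fin n) (Fin n) ℂ) - B) * ((A : Matrix (Fin n) (Fin n) ℂ) - B) := by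
    have := fc_mul (A - B) (fun x => x) (fun x => x)
    rw [fc_id] at this
    simp only [← pow_two] at this
    rw [← this, pow_two]
    rfl
  have hA : ∀ g : ℝ → ℝ, (fc g A : Matrix (Fin n) (Fin n) ℂ) * (A : Matrix (Fin n) (Fin n) ℂ)
      = (fc (fun x => g x * x) A : Matrix (Fin n) (Fin n) ℂ) := fun g => by
    rw [← fc_mul, fc_id]
  have hA' : ∀ g : ℝ → ℝ, (A : Matrix (Fin n) (Fin n) ℂ) * (fc g A : Matrix (Fin n) (Fin n) ℂ)
      = (fc (fun x => x * g x) A : Matrix (Fin n) (Fin n) ℂ) := fun g => by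
    rw [← fc_mul, fc_id]
  have hB : (B : Matrix (Fin n) (Fin n) ℂ) * (B : Matrix (Fin n) (Fin n) ℂ) =
      fc (fun x => x * x) B := by
    rw [← fc_mul, fc_id]
  have key : ip (fc f A) (fc (fun x => x ^ 2) (A - B)) =
      ip (fc (fun x => f x * x * x) A) (fc (fun _ => 1) B)
      - ip (fc (fun x => f x * x) A) (fc (fun x => x) B)
      - ip (fc (fun x => x * f x) A) (fc (fun x => x) B)
      + ip (fc f A) (fc (fun x => x * x) B) := by
    rw [fc_one, fc_id]
    simp only [ip_def, hsq, ← hA, ← hA', ← hB]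
    rw [← Complex.sub_re, ← Complex.sub_re, ← Complex.add_re]
    congr 1
    rw [Matrix.mul_assoc (A : Matrix (Fin n) (Fin n) ℂ),
      Matrix.trace_mul_comm (A : Matrix (Fin n) (Fin n) ℂ),
      ← Matrix.trace_sub, ← Matrix.trace_sub, ← Matrix.trace_add]
    congr 1
    rw [show ((1 : selfAdjoint (Matrix (Fin n) (Fin n) ℂ)) : Matrix (Fin n) (Fin n) ℂ) = 1 from rfl]
    noncomm_ring
  rw [key]
  simp only [ip_fc_fc, ← Finset.sum_sub_distrib, ← Finset.sum_add_distrib]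
  refine Finset.sum_congr rfl fun i _ => Finset.sum_congr rfl fun j _ => ?_
  ring

end Coupling

/-! ### Type 2 of the Schatten classes -/

/-- The function `x |x|^s`. -/
noncomputable def gfun (s x : ℝ) : ℝ := x * |x| ^ s

/-- A form of Bernoulli's inequality `1 + (s + 1) (t - 1) ≤ t ^ (s + 1)` at `t = x / y`. -/
lemma gfun_aux {s : ℝ} (hs : 0 < s) {x y : ℝ} (hx : 0 ≤ x) (hxy : x ≤ y) :
    x * (y ^ s - x ^ s) ≤ s * y ^ s * (y - x) := by
  rcases hxy.eq_or_lt with h | h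
  · subst h; simp
  have hy : 0 < y := lt_of_le_of_lt hx h
  have hys : 0 < y ^ s := Real.rpow_pos_of_pos hy s
  have ht : 0 ≤ x / y := by positivity
  have hb := one_add_mul_self_le_rpow_one_add (s := x / y - 1) (by linarith) (p := s + 1)
    (by linarith)
  rw [show 1 + (x / y - 1) = x / y by ring, Real.rpow_add' ht (by linarith), Real.rpow_one,
    Real.div_rpow hx hy.le] at hb
  have h2 := mul_le_mul_of_nonneg_right hb (mul_pos hys hy).le
  have e1 : x ^ s / y ^ s * (x / y) * (y ^ s * y) = x ^ s * x := by field_simp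
  have e2 : (1 + (s + 1) * (x / y - 1)) * (y ^ s * y) = y ^ s * (y + (s + 1) * (x - y)) := by
    field_simp
  rw [e1, e2] at h2
  linarith

lemma gfun_sub_le {s : ℝ} (hs : 0 < s) {a c : ℝ} (h : |c| ≤ |a|) :
    (a - c) * (gfun s a - gfun s c) ≤ (s + 1) * |a| ^ s * (a - c) ^ 2 := by
  have h1 := gfun_aux hs (abs_nonneg c) h
  have h2 : 0 ≤ |a| ^ s - |c| ^ s :=
    sub_nonneg.2 (Real.rpow_le_rpow (abs_nonneg _) h hs.le)
  have h3 : |a| - |c| ≤ |a - c| := abs_sub_abs_le_abs_sub a c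
  have h4 : 0 ≤ |a| ^ s := by positivity
  have h5 : (a - c) * (c * (|a| ^ s - |c| ^ s)) ≤ |a - c| * (|c| * (|a| ^ s - |c| ^ s)) := by
    calc _ ≤ |(a - c) * (c * (|a| ^ s - |c| ^ s))| := le_abs_self _
      _ = _ := by rw [abs_mul, abs_mul, abs_of_nonneg h2]
  have h6 : |a - c| * (|c| * (|a| ^ s - |c| ^ s)) ≤ |a - c| * (s * |a| ^ s * |a - c|) := by
    refine mul_le_mul_of_nonneg_left (h1.trans ?_) (abs_nonneg _)
    exact mul_le_mul_of_nonneg_left h3 (by positivity)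
  have h7 : |a - c| * |a - c| = (a - c) ^ 2 := by rw [← pow_two, sq_abs]
  have h8 : |a - c| * (s * |a| ^ s * |a - c|) = s * |a| ^ s * (a - c) ^ 2 := by
    rw [← h7]; ring
  have h9 : (a - c) * (gfun s a - gfun s c) =
      |a| ^ s * (a - c) ^ 2 + (a - c) * (c * (|a| ^ s - |c| ^ s)) := by
    unfold gfun; ring
  rw [h9]
  linarith

/-- The derivative of `x |x|^s` is `(s + 1) |x|^s`, so its increment from `c` to `a` is at most
`(s + 1) max (|a|^s, |c|^s) |a - c|`. -/
lemma gfun_mono_bound {s : ℝ} (hs : 0 < s) (a c : ℝ) :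
    (a - c) * (gfun s a - gfun s c) ≤ (s + 1) * (|a| ^ s + |c| ^ s) * (a - c) ^ 2 := by
  have ha : 0 ≤ (s + 1) * |a| ^ s * (a - c) ^ 2 := by positivity
  have hc : 0 ≤ (s + 1) * |c| ^ s * (a - c) ^ 2 := by positivity
  rcases le_total |c| |a| with h | h
  · have := gfun_sub_le hs h
    nlinarith
  · have := gfun_sub_le hs h
    nlinarith

lemma mul_gfun {s : ℝ} (hs : 0 < s) (x : ℝ) : x * gfun s x = |x| ^ (s + 2) := by
  rw [gfun, Real.rpow_add' (abs_nonneg x) (by linarith), Real.rpow_two, sq_abs]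
  ring

/-- The sum of the `r`-th powers of the absolute values of the eigenvalues. -/
noncomputable def pw {n : ℕ} (r : ℝ) (A : selfAdjoint (Matrix (Fin n) (Fin n) ℂ)) : ℝ :=
  ∑ i, |eig A i| ^ r

section TypeTwo
variable {n : ℕ} (A B : selfAdjoint (Matrix (Fin n) (Fin n) ℂ))

lemma schNorm_eq (r : ℝ) : schNorm r A = pw r A ^ (1 / r) := rfl

lemma pw_nonneg (r : ℝ) : 0 ≤ pw r A := Finset.sum_nonneg fun _ _ => by positivity

lemma schNorm_nonneg (r : ℝ) : 0 ≤ schNorm r A := Real.rpow_nonneg (pw_nonneg A r) _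

lemma ip_fc_self (f : ℝ → ℝ) : ip A (fc f A) = ip (fc (fun x => x * f x) A) 1 := by
  rw [ip_def, ip_def, ← fc_mul, fc_id]
  congr 2
  exact (Matrix.mul_one _).symm

lemma pw_eq_ip {s : ℝ} (hs : 0 < s) : pw (s + 2) A = ip A (fc (gfun s) A) := by
  rw [ip_fc_self, ip_fc_one, pw]
  simp_rw [mul_gfun hs]

lemma coe_fc_sq : (fc (fun x => x ^ 2) A : Matrix (Fin n) (Fin n) ℂ) =
    (A : Matrix (Fin n) (Fin n) ℂ) * A := by
  conv_rhs => rw [← fc_id A, fc_mul]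
  simp only [pow_two]

lemma fc_sq_smul (c : ℝ) : fc (fun x => x ^ 2) (c • A) = c ^ 2 • fc (fun x => x ^ 2) A := by
  apply Subtype.ext
  rw [selfAdjoint.val_smul, coe_fc_sq, coe_fc_sq, selfAdjoint.val_smul, Matrix.smul_mul,
    Matrix.mul_smul, smul_smul, pow_two]

/-- Trace form of the local Lipschitz bound for `x |x|^s`. -/
lemma ip_gfun_le {s : ℝ} (hs : 0 < s) :
    ip (A - B) (fc (gfun s) A - fc (gfun s) B) ≤
      (s + 1) * (ip (fc (fun x => |x| ^ s) A) (fc (fun x => x ^ 2) (A - B)) +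
        ip (fc (fun x => |x| ^ s) B) (fc (fun x => x ^ 2) (A - B))) := by
  have h1 : ip (A - B) (fc (gfun s) A - fc (gfun s) B) =
      ∑ i, ∑ j, (eig A i - eig B j) * (gfun s (eig A i) - gfun s (eig B j)) * wt A B i j := by
    have : ip (A - B) (fc (gfun s) A - fc (gfun s) B) =
        ip (fc (fun x => x * gfun s x) A) (fc (fun _ => 1) B)
        - ip (fc (fun x => x) A) (fc (gfun s) B)
        - ip (fc (gfun s) A) (fc (fun x => x) B)
        + ip (fc (fun _ => 1) A) (fc (fun x => x * gfun s x) B) := by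
      rw [fc_one, fc_id, fc_id, fc_one, ← ip_fc_self, ip_comm 1, ← ip_fc_self,
        ip_comm (fc (gfun s) A) B]
      simp only [map_sub, LinearMap.sub_apply]
      ring
    rw [this]
    simp only [ip_fc_fc, ← Finset.sum_sub_distrib, ← Finset.sum_add_distrib]
    refine Finset.sum_congr rfl fun i _ => Finset.sum_congr rfl fun j _ => ?_
    ring
  have h2 : fc (fun x => x ^ 2) (A - B) = fc (fun x => x ^ 2) (B - A) := by
    rw [show A - B = (-1 : ℝ) • (B - A) by simp, fc_sq_smul]
    simp
  have h3 : ip (fc (fun x => |x| ^ s) B) (fc (fun x => x ^ 2) (A - B)) =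
      ∑ i, ∑ j, |eig B j| ^ s * (eig A i - eig B j) ^ 2 * wt A B i j := by
    rw [h2, ip_fc_sub_sq, Finset.sum_comm]
    refine Finset.sum_congr rfl fun i _ => Finset.sum_congr rfl fun j _ => ?_
    rw [wt_symm B A]
    ring
  rw [h1, ip_fc_sub_sq, h3, ← Finset.sum_add_distrib, Finset.mul_sum]
  refine Finset.sum_le_sum fun i _ => ?_
  rw [← Finset.sum_add_distrib, Finset.mul_sum]
  refine Finset.sum_le_sum fun j _ => ?_
  have := mul_le_mul_of_nonneg_right (gfun_mono_bound hs (eig A i) (eig B j)) (wt_nonneg A B i j)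
  linarith

/-- Hölder's inequality `tr (|A|^s B²) ≤ ‖A‖_r^s ‖B‖_r²`, `r = s + 2`, linearised by Young's
inequality around the scales `α` and `β`. -/
lemma ip_young {s α β : ℝ} (hs : 0 < s) (hα : 0 < α) (hβ : 0 < β) :
    ip (fc (fun x => |x| ^ s) A) (fc (fun x => x ^ 2) B) ≤
      α ^ s * β ^ 2 * (s / (s + 2) * (pw (s + 2) A / α ^ (s + 2)) +
        2 / (s + 2) * (pw (s + 2) B / β ^ (s + 2))) := by
  have hsc : ∀ a b : ℝ, 0 ≤ a → 0 ≤ b → a ^ s * b ^ 2 ≤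
      α ^ s * β ^ 2 * (s / (s + 2) * (a ^ (s + 2) / α ^ (s + 2)) +
        2 / (s + 2) * (b ^ (s + 2) / β ^ (s + 2))) := by
    intro a b ha hb
    have h := Real.geom_mean_le_arith_mean2_weighted (w₁ := s / (s + 2)) (w₂ := 2 / (s + 2))
      (p₁ := (a / α) ^ (s + 2)) (p₂ := (b / β) ^ (s + 2)) (by positivity) (by positivity)
      (by positivity) (by positivity) (by field_simp)
    rw [← Real.rpow_mul (by positivity), ← Real.rpow_mul (by positivity),
      mul_div_cancel₀ _ (by positivity), mul_div_cancel₀ _ (by positivity),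
      Real.div_rpow ha hα.le, Real.rpow_two, Real.div_rpow ha hα.le, Real.div_rpow hb hβ.le] at h
    calc a ^ s * b ^ 2 = α ^ s * β ^ 2 * (a ^ s / α ^ s * (b / β) ^ 2) := by
          field_simp
      _ ≤ _ := mul_le_mul_of_nonneg_left h (by positivity)
  have hA : pw (s + 2) A = ∑ i, ∑ j, |eig A i| ^ (s + 2) * wt A B i j := by
    simp_rw [← Finset.mul_sum, wt_row, mul_one]; rfl
  have hB : pw (s + 2) B = ∑ i, ∑ j, |eig B j| ^ (s + 2) * wt A B i j := by
    rw [Finset.sum_comm]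
    simp_rw [← Finset.mul_sum, wt_col, mul_one]; rfl
  rw [ip_fc_fc, hA, hB]
  simp only [Finset.sum_div, Finset.mul_sum, ← Finset.sum_add_distrib]
  refine Finset.sum_le_sum fun i _ => Finset.sum_le_sum fun j _ => ?_
  have := mul_le_mul_of_nonneg_right (hsc |eig A i| |eig B j| (abs_nonneg _) (abs_nonneg _))
    (wt_nonneg A B i j)
  rw [sq_abs] at this
  calc _ ≤ _ := this
    _ = _ := by ring

/-- The signed sum `∑ εᵢ yᵢ`. -/
noncomputable def rad {ι : Type} [Fintype ι] {V : Type} [AddCommGroup V] [Module ℝ V]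
    (y : ι → V) (ε : ι → ℤˣ) : V := ∑ i, (((ε i : ℤ) : ℝ)) • y i

lemma rad_flip {ι : Type} [Fintype ι] [DecidableEq ι] {V : Type} [AddCommGroup V] [Module ℝ V]
    (y : ι → V) (ε : ι → ℤˣ) (i : ι) :
    rad y ε - rad y (ε * (Pi.mulSingle i (-1) : ι → ℤˣ)) = (2 * ((ε i : ℤ) : ℝ)) • y i := by
  rw [rad, rad, ← Finset.sum_sub_distrib, Finset.sum_eq_single i]
  · simp [two_mul, add_smul]
  · intro j _ hj
    simp [Pi.mulSingle_eq_of_ne hj]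
  · simp

lemma sgn_sq (u : ℤˣ) : (((u : ℤ) : ℝ)) * (((u : ℤ) : ℝ)) = 1 := by
  rcases Int.units_eq_one_or u with h | h <;> simp [h]

lemma sum_flip {ι : Type} [Fintype ι] [DecidableEq ι] (i : ι) (F : (ι → ℤˣ) → ℝ) :
    ∑ ε : ι → ℤˣ, F (ε * (Pi.mulSingle i (-1) : ι → ℤˣ)) = ∑ ε, F ε :=
  Equiv.sum_comp (Equiv.mulRight (Pi.mulSingle i (-1) : ι → ℤˣ)) F

/-- Pairing each choice of signs with the one where the `i`-th sign is flipped turns the left side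
into the increments controlled by `ip_gfun_le`. -/
lemma sum_rad_le {ι : Type} [Fintype ι] [DecidableEq ι] {s : ℝ} (hs : 0 < s)
    (y : ι → selfAdjoint (Matrix (Fin n) (Fin n) ℂ)) (i : ι) :
    ∑ ε : ι → ℤˣ, ((ε i : ℤ) : ℝ) * ip (y i) (fc (gfun s) (rad y ε)) ≤
      2 * (s + 1) * ∑ ε : ι → ℤˣ,
        ip (fc (fun x => |x| ^ s) (rad y ε)) (fc (fun x => x ^ 2) (y i)) := by
  set δ : ι → ℤˣ := Pi.mulSingle i (-1) with hδ
  have h1 := sum_flip i (fun ε => ((ε i : ℤ) : ℝ) * ip (y i) (fc (gfun s) (rad y ε)))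
  have h2 := sum_flip i
    (fun ε => ip (fc (fun x => |x| ^ s) (rad y ε)) (fc (fun x => x ^ 2) (y i)))
  rw [← hδ] at h1 h2
  have h3 : ∀ ε : ι → ℤˣ, 2 * (((ε i : ℤ) : ℝ) * ip (y i) (fc (gfun s) (rad y ε)) +
      (((ε * δ) i : ℤ) : ℝ) * ip (y i) (fc (gfun s) (rad y (ε * δ)))) ≤
      4 * (s + 1) * (ip (fc (fun x => |x| ^ s) (rad y ε)) (fc (fun x => x ^ 2) (y i)) +
        ip (fc (fun x => |x| ^ s) (rad y (ε * δ))) (fc (fun x => x ^ 2) (y i))) := by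
    intro ε
    have h := ip_gfun_le (rad y ε) (rad y (ε * δ)) hs
    rw [rad_flip, fc_sq_smul] at h
    simp only [map_smul, map_sub, LinearMap.smul_apply, smul_eq_mul] at h
    have hs1 := sgn_sq (ε i)
    have e1 : (((ε * δ) i : ℤ) : ℝ) = - ((ε i : ℤ) : ℝ) := by simp [hδ]
    have e2 : (2 * ((ε i : ℤ) : ℝ)) ^ 2 = 4 := by nlinarith
    rw [e2] at h
    rw [e1]
    linarith
  have h4 := Finset.sum_le_sum fun ε (_ : ε ∈ Finset.univ) => h3 ε
  rw [← Finset.mul_sum, ← Finset.mul_sum, Finset.sum_add_distrib, Finset.sum_add_distrib, h1, h2]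
    at h4
  linarith

/-- Schatten classes with exponent `r = s + 2 > 2` have type `2`, with a constant independent of
the size of the matrices. -/
lemma type_two {ι : Type} [Fintype ι] [DecidableEq ι] {s β : ℝ} (hs : 0 < s) (hβ : 0 < β)
    (y : ι → selfAdjoint (Matrix (Fin n) (Fin n) ℂ)) (hy : ∀ i, pw (s + 2) (y i) ≤ β ^ (s + 2)) :
    (∑ ε : ι → ℤˣ, pw (s + 2) (rad y ε)) / Fintype.card (ι → ℤˣ) ≤
      (Real.sqrt (2 * (s + 1) * Fintype.card ι) * β) ^ (s + 2) := by
  set M : ℝ := ((Fintype.card (ι → ℤˣ) : ℕ) : ℝ) with hM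
  have hM0 : 0 < M := by rw [hM]; exact_mod_cast Fintype.card_pos
  set T : ℝ := (∑ ε : ι → ℤˣ, pw (s + 2) (rad y ε)) / M with hT
  have hT0 : 0 ≤ T := div_nonneg (Finset.sum_nonneg fun _ _ => pw_nonneg _ _) hM0.le
  have hTM : ∑ ε : ι → ℤˣ, pw (s + 2) (rad y ε) = T * M := by
    rw [hT]; field_simp
  rcases hT0.eq_or_lt with h0 | hpos
  · rw [← h0]; positivity
  set α : ℝ := T ^ (1 / (s + 2)) with hα
  have hα0 : 0 < α := Real.rpow_pos_of_pos hpos _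
  have hαT : α ^ (s + 2) = T := by
    rw [hα, ← Real.rpow_mul hT0, one_div_mul_cancel (by positivity), Real.rpow_one]
  have h1 : ∀ i, ∑ ε : ι → ℤˣ,
      ip (fc (fun x => |x| ^ s) (rad y ε)) (fc (fun x => x ^ 2) (y i)) ≤ α ^ s * β ^ 2 * M := by
    intro i
    calc _ ≤ ∑ ε : ι → ℤˣ, α ^ s * β ^ 2 * (s / (s + 2) * (pw (s + 2) (rad y ε) / α ^ (s + 2)) +
        2 / (s + 2) * 1) := by
          refine Finset.sum_le_sum fun ε _ => (ip_young _ _ hs hα0 hβ).trans ?_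
          gcongr
          rw [div_le_one (by positivity)]
          exact hy i
      _ = α ^ s * β ^ 2 * (s / (s + 2) * ((T * M) / T) + 2 / (s + 2) * M) := by
          rw [← Finset.mul_sum, Finset.sum_add_distrib, ← Finset.mul_sum, ← Finset.sum_div, hTM,
            hαT, Finset.sum_const, Finset.card_univ, nsmul_eq_mul, ← hM]
          ring
      _ = _ := by field_simp
  have h2 : T * M ≤ Fintype.card ι * (2 * (s + 1) * (α ^ s * β ^ 2 * M)) := by
    calc T * M = ∑ ε : ι → ℤˣ, ∑ i, ((ε i : ℤ) : ℝ) * ip (y i) (fc (gfun s) (rad y ε)) := by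
          rw [← hTM]
          refine Finset.sum_congr rfl fun ε _ => ?_
          rw [pw_eq_ip _ hs]
          conv_lhs => enter [1, 2]; rw [rad]
          simp [LinearMap.sum_apply]
      _ ≤ ∑ i : ι, 2 * (s + 1) * (α ^ s * β ^ 2 * M) := by
          rw [Finset.sum_comm]
          refine Finset.sum_le_sum fun i _ => (sum_rad_le hs y i).trans ?_
          exact mul_le_mul_of_nonneg_left (h1 i) (by positivity)
      _ = _ := by rw [Finset.sum_const, Finset.card_univ, nsmul_eq_mul]
  have h3 : α ^ 2 ≤ 2 * (s + 1) * Fintype.card ι * β ^ 2 := by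
    have hαs : 0 < α ^ s := Real.rpow_pos_of_pos hα0 s
    rw [← hαT, Real.rpow_add hα0, Real.rpow_two] at h2
    refine le_of_mul_le_mul_left (a := α ^ s * M) ?_ (by positivity)
    linarith
  rw [← hαT]
  refine Real.rpow_le_rpow hα0.le ?_ (by positivity)
  refine (pow_le_pow_iff_left₀ hα0.le (by positivity) two_ne_zero).1 ?_
  rw [mul_pow, Real.sq_sqrt (by positivity)]
  exact h3

end TypeTwo

/-! ### Hölder, duality and a tight frame -/

section Frame
variable {n : ℕ} (A B : selfAdjoint (Matrix (Fin n) (Fin n) ℂ))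

lemma pw_smul (r c : ℝ) : pw r (c • A) = |c| ^ r * pw r A := by
  rw [← fc_smul, pw, sum_eig_fc A _ (fun x => |x| ^ r), pw, Finset.mul_sum]
  refine Finset.sum_congr rfl fun i _ => ?_
  rw [abs_mul, Real.mul_rpow (abs_nonneg _) (abs_nonneg _)]

lemma schNorm_smul {r : ℝ} (hr : 0 < r) (c : ℝ) : schNorm r (c • A) = |c| * schNorm r A := by
  rw [schNorm_eq, pw_smul, Real.mul_rpow (by positivity) (pw_nonneg _ _),
    ← Real.rpow_mul (abs_nonneg _), mul_one_div_cancel hr.ne', Real.rpow_one, schNorm_eq]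

/-- Hölder's inequality for Schatten norms. -/
lemma abs_ip_le {r q : ℝ} (h : r.HolderConjugate q) :
    |ip A B| ≤ schNorm r A * schNorm q B := by
  have hA : pw r A = ∑ x : Fin n × Fin n, abs ((wt A B x.1 x.2) ^ (1 / r) * |eig A x.1|) ^ r := by
    rw [Fintype.sum_prod_type, pw]
    refine Finset.sum_congr rfl fun i _ => ?_
    have : ∀ j, abs ((wt A B i j) ^ (1 / r) * |eig A i|) ^ r = |eig A i| ^ r * wt A B i j := by
      intro j
      have hw := wt_nonneg A B i j
      rw [abs_of_nonneg (by positivity), Real.mul_rpow (by positivity) (by positivity),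
        ← Real.rpow_mul hw, one_div_mul_cancel h.ne_zero, Real.rpow_one, mul_comm]
    simp_rw [this, ← Finset.mul_sum, wt_row, mul_one]
  have hB : pw q B = ∑ x : Fin n × Fin n, abs ((wt A B x.1 x.2) ^ (1 / q) * |eig B x.2|) ^ q := by
    rw [Fintype.sum_prod_type, Finset.sum_comm, pw]
    refine Finset.sum_congr rfl fun j _ => ?_
    have : ∀ i, abs ((wt A B i j) ^ (1 / q) * |eig B j|) ^ q = |eig B j| ^ q * wt A B i j := by
      intro i
      have hw := wt_nonneg A B i j
      rw [abs_of_nonneg (by positivity), Real.mul_rpow (by positivity) (by positivity),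
        ← Real.rpow_mul hw, one_div_mul_cancel h.symm.ne_zero, Real.rpow_one, mul_comm]
    simp_rw [this, ← Finset.mul_sum, wt_col, mul_one]
  have hip : ip A B = ∑ x : Fin n × Fin n, eig A x.1 * eig B x.2 * wt A B x.1 x.2 := by
    rw [Fintype.sum_prod_type]
    conv_lhs => rw [← fc_id A, ← fc_id B, ip_fc_fc]
  rw [schNorm_eq, schNorm_eq, hA, hB, hip]
  refine (Finset.abs_sum_le_sum_abs _ _).trans ?_
  refine le_trans (le_of_eq ?_) (Real.inner_le_Lp_mul_Lq Finset.univ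
    (fun x : Fin n × Fin n => (wt A B x.1 x.2) ^ (1 / r) * |eig A x.1|)
    (fun x : Fin n × Fin n => (wt A B x.1 x.2) ^ (1 / q) * |eig B x.2|) h)
  refine Finset.sum_congr rfl fun x _ => ?_
  have hw := wt_nonneg A B x.1 x.2
  have hw2 : (wt A B x.1 x.2) ^ (1 / r) * (wt A B x.1 x.2) ^ (1 / q) = wt A B x.1 x.2 := by
    rw [← Real.rpow_add' hw (by rw [one_div, one_div, h.inv_add_inv_eq_one]; norm_num), one_div,
      one_div, h.inv_add_inv_eq_one, Real.rpow_one]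
  rw [abs_mul, abs_mul, abs_of_nonneg hw]
  nth_rewrite 1 [← hw2]
  ring

lemma abs_gfun {s : ℝ} (hs : 0 < s) (x : ℝ) : |gfun s x| = |x| ^ (s + 1) := by
  rw [gfun, abs_mul, abs_of_nonneg (Real.rpow_nonneg (abs_nonneg x) s),
    Real.rpow_add' (abs_nonneg x) (by linarith), Real.rpow_one, mul_comm]

/-- Duality: a functional `tr (A ·)` bounded by `c` on the unit ball of `S_q` has `‖A‖_r ≤ c`. -/
lemma schNorm_le_of_ip_le {s c : ℝ} (hs : 0 < s) (hc : 0 ≤ c)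
    (h : ∀ B, ip A B ≤ c * schNorm ((s + 2) / (s + 1)) B) : schNorm (s + 2) A ≤ c := by
  have h1 := h (fc (gfun s) A)
  rw [← pw_eq_ip A hs, schNorm_eq] at h1
  have h2 : pw ((s + 2) / (s + 1)) (fc (gfun s) A) = pw (s + 2) A := by
    rw [pw, sum_eig_fc A _ (fun x => |x| ^ ((s + 2) / (s + 1))), pw]
    refine Finset.sum_congr rfl fun i _ => ?_
    rw [abs_gfun hs, ← Real.rpow_mul (abs_nonneg _), mul_div_cancel₀ _ (by positivity)]
  rw [h2] at h1
  rw [schNorm_eq]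
  rcases (pw_nonneg A (s + 2)).eq_or_lt with h0 | hpos
  · rw [← h0, Real.zero_rpow (by positivity)]; exact hc
  · have h3 : pw (s + 2) A = pw (s + 2) A ^ (1 / (s + 2)) *
        pw (s + 2) A ^ (1 / ((s + 2) / (s + 1))) := by
      rw [← Real.rpow_add hpos]
      conv_lhs => rw [← Real.rpow_one (pw (s + 2) A)]
      congr 1
      field_simp
      ring
    refine le_of_mul_le_mul_right (a := pw (s + 2) A ^ (1 / ((s + 2) / (s + 1)))) ?_
      (Real.rpow_pos_of_pos hpos _)
    rw [← h3]
    exact h1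

/-- Gershgorin-type bound for the eigenvalues by the absolute row sums. -/
lemma abs_eig_le {c : ℝ} (h : ∀ a, ∑ b, ‖(A : Matrix (Fin n) (Fin n) ℂ) a b‖ ≤ c) (i : Fin n) :
    |eig A i| ≤ c := by
  have hv := Matrix.IsHermitian.mulVec_eigenvectorBasis
    (A.2 : (A : Matrix (Fin n) (Fin n) ℂ).IsHermitian) i
  set x := (Matrix.IsHermitian.eigenvectorBasis
    (A.2 : (A : Matrix (Fin n) (Fin n) ℂ).IsHermitian) i) with hx
  have hx0 : x.ofLp ≠ 0 := by
    intro h0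
    have h1 := (Matrix.IsHermitian.eigenvectorBasis
      (A.2 : (A : Matrix (Fin n) (Fin n) ℂ).IsHermitian)).orthonormal.1 i
    rw [← hx, show x = 0 from by ext j; exact congrFun h0 j] at h1
    simp at h1
  have hev : Module.End.HasEigenvalue (Matrix.toLin' (A : Matrix (Fin n) (Fin n) ℂ))
      ((eig A i : ℝ) : ℂ) := by
    refine Module.End.hasEigenvalue_of_hasEigenvector (x := x.ofLp) ⟨?_, hx0⟩
    rw [Module.End.mem_eigenspace_iff, Matrix.toLin'_apply, hv]
    ext j
    simp [eig]
  obtain ⟨k, hk⟩ := eigenvalue_mem_ball hev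
  rw [Metric.mem_closedBall, dist_eq_norm] at hk
  have h2 := h k
  rw [← Finset.add_sum_erase _ _ (Finset.mem_univ k)] at h2
  have h3 : ‖((eig A i : ℝ) : ℂ)‖ = |eig A i| := by simp
  have h4 := norm_le_norm_add_norm_sub' ((eig A i : ℝ) : ℂ) ((A : Matrix (Fin n) (Fin n) ℂ) k k)
  rw [h3] at h4
  linarith

/-- The self-adjoint matrix `ω Eᵢⱼ + ω̄ Eⱼᵢ`. -/
noncomputable def fe {n : ℕ} (i j : Fin n) (ω : ℂ) : selfAdjoint (Matrix (Fin n) (Fin n) ℂ) :=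
  ⟨Matrix.single i j ω + Matrix.single j i (star ω), by
    rw [selfAdjoint.mem_iff, Matrix.star_eq_conjTranspose, Matrix.conjTranspose_add,
      Matrix.conjTranspose_single, Matrix.conjTranspose_single, star_star, add_comm]⟩

lemma coe_fe (i j : Fin n) (ω : ℂ) : (fe i j ω : Matrix (Fin n) (Fin n) ℂ) =
    Matrix.single i j ω + Matrix.single j i (star ω) := rfl

lemma norm_fe_le {ω : ℂ} (hω : ‖ω‖ = 1) (i j a b : Fin n) :
    ‖(fe i j ω : Matrix (Fin n) (Fin n) ℂ) a b‖ ≤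
      (if i = a ∧ j = b then 1 else 0) + (if j = a ∧ i = b then 1 else 0) := by
  rw [coe_fe, Matrix.add_apply, Matrix.single_apply, Matrix.single_apply]
  refine (norm_add_le _ _).trans (add_le_add ?_ ?_) <;> split_ifs <;> simp [hω]

lemma schNorm_fe_le {ω : ℂ} (hω : ‖ω‖ = 1) (i j : Fin n) {q : ℝ} (hq : 1 ≤ q) :
    schNorm q (fe i j ω) ≤ 4 := by
  have h1 : ∀ k, |eig (fe i j ω) k| ≤ 2 := by
    refine abs_eig_le _ fun a => ?_
    refine (Finset.sum_le_sum fun b _ => norm_fe_le hω i j a b).trans ?_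
    rw [Finset.sum_add_distrib]
    simp only [ite_and]
    by_cases h1 : i = a <;> by_cases h2 : j = a <;> simp [h1, h2] <;> norm_num
  have h2 : (fe i j ω : Matrix (Fin n) (Fin n) ℂ).rank ≤ 2 := by
    have hPQ : (fe i j ω : Matrix (Fin n) (Fin n) ℂ) =
        (Matrix.of fun a (t : Fin 2) => if t = 0 then (if i = a then ω else 0) else
          (if j = a then star ω else 0)) *
        (Matrix.of fun (t : Fin 2) b => if t = 0 then (if j = b then (1 : ℂ) else 0) else
          (if i = b then 1 else 0)) := by
      ext a b
      rw [coe_fe, Matrix.add_apply, Matrix.single_apply, Matrix.single_apply, Matrix.mul_apply,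
        Fin.sum_univ_two]
      simp only [ite_and, Matrix.of_apply]
      congr 1 <;> simp <;> split_ifs <;> rfl
    rw [hPQ]
    refine (Matrix.rank_mul_le_left _ _).trans ?_
    refine (Matrix.rank_le_card_width _).trans ?_
    simp
  rw [Matrix.IsHermitian.rank_eq_card_non_zero_eigs
    ((fe i j ω).2 : ((fe i j ω) : Matrix (Fin n) (Fin n) ℂ).IsHermitian),
    Fintype.card_subtype] at h2
  have h3 : pw q (fe i j ω) ≤ 4 ^ q := by
    calc pw q (fe i j ω) = ∑ k with eig (fe i j ω) k ≠ 0, |eig (fe i j ω) k| ^ q := by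
          rw [Finset.sum_filter, pw]
          refine Finset.sum_congr rfl fun k _ => ?_
          split_ifs with h
          · rfl
          · rw [not_not.1 h, abs_zero, Real.zero_rpow (by linarith)]
      _ ≤ ∑ k with eig (fe i j ω) k ≠ 0, (2 : ℝ) ^ q :=
          Finset.sum_le_sum fun k _ => Real.rpow_le_rpow (abs_nonneg _) (h1 k) (by linarith)
      _ ≤ 2 * 2 ^ q := by
          rw [Finset.sum_const, nsmul_eq_mul]
          refine mul_le_mul_of_nonneg_right ?_ (by positivity)
          exact_mod_cast h2
      _ ≤ 2 ^ q * 2 ^ q := by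
          refine mul_le_mul_of_nonneg_right ?_ (by positivity)
          calc (2 : ℝ) = 2 ^ (1 : ℝ) := by simp
            _ ≤ 2 ^ q := Real.rpow_le_rpow_of_exponent_le (by norm_num) hq
      _ = 4 ^ q := by rw [← Real.mul_rpow (by norm_num) (by norm_num)]; norm_num
  calc schNorm q (fe i j ω) ≤ (4 ^ q) ^ (1 / q) := by
        rw [schNorm_eq]
        exact Real.rpow_le_rpow (pw_nonneg _ _) h3 (by positivity)
    _ = 4 := by
        rw [← Real.rpow_mul (by norm_num), mul_one_div_cancel (by positivity), Real.rpow_one]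

/-- A signed sum of the `fe i (σ i) ω` over a permutation `σ` is `M + M*` with `M` unitary, so
its Schatten `r`-norm is at most `2 n^{1/r}`. -/
lemma schNorm_rad_fe_le {ω : ℂ} (hω : ‖ω‖ = 1) (σ : Equiv.Perm (Fin n)) {r : ℝ} (hr : 0 < r)
    (ε : Fin n → ℤˣ) : schNorm r (rad (fun i => fe i (σ i) ω) ε) ≤ 2 * (n : ℝ) ^ (1 / r) := by
  have h1 : ∀ k, |eig (rad (fun i => fe i (σ i) ω) ε) k| ≤ 2 := by
    refine abs_eig_le _ fun a => ?_
    have hb : ∀ b, ‖((rad (fun i => fe i (σ i) ω) ε :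
        selfAdjoint (Matrix (Fin n) (Fin n) ℂ)) : Matrix (Fin n) (Fin n) ℂ) a b‖ ≤
        ∑ i, ((if i = a ∧ σ i = b then 1 else 0) + (if σ i = a ∧ i = b then 1 else 0)) := by
      intro b
      rw [rad, AddSubgroup.val_finsetSum, Matrix.sum_apply]
      refine (norm_sum_le _ _).trans (Finset.sum_le_sum fun i _ => ?_)
      rw [selfAdjoint.val_smul, Matrix.smul_apply, norm_smul]
      have : ‖((ε i : ℤ) : ℝ)‖ = 1 := by
        rcases Int.units_eq_one_or (ε i) with h | h <;> simp [h]
      rw [this, one_mul]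
      exact norm_fe_le hω _ _ _ _
    refine (Finset.sum_le_sum fun b _ => hb b).trans ?_
    rw [Finset.sum_comm]
    simp only [Finset.sum_add_distrib, ite_and]
    have e1 : ∀ i, (∑ b, if i = a then (if σ i = b then (1 : ℝ) else 0) else 0) =
        if i = a then 1 else 0 := fun i => by split_ifs <;> simp
    have e2 : ∀ i, (∑ b, if σ i = a then (if i = b then (1 : ℝ) else 0) else 0) =
        if i = σ.symm a then 1 else 0 := fun i => by
      by_cases h : σ i = a
      · simp [h, Equiv.eq_symm_apply]
      · simp [h, Equiv.eq_symm_apply]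
    simp_rw [e1, e2]
    simp
    norm_num
  have h2 : pw r (rad (fun i => fe i (σ i) ω) ε) ≤ n * 2 ^ r := by
    calc _ ≤ ∑ _k : Fin n, (2 : ℝ) ^ r :=
          Finset.sum_le_sum fun k _ => Real.rpow_le_rpow (abs_nonneg _) (h1 k) hr.le
      _ = _ := by simp
  calc _ ≤ (n * 2 ^ r : ℝ) ^ (1 / r) := by
        rw [schNorm_eq]
        exact Real.rpow_le_rpow (pw_nonneg _ _) h2 (by positivity)
    _ = _ := by
        rw [Real.mul_rpow (by positivity) (by positivity), ← Real.rpow_mul (by norm_num),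
          mul_one_div_cancel hr.ne', Real.rpow_one, mul_comm]

/-- The two phases `1` and `i`. -/
noncomputable def ph (t : Bool) : ℂ := if t then 1 else Complex.I

lemma norm_ph (t : Bool) : ‖ph t‖ = 1 := by cases t <;> simp [ph]

lemma ip_fe (i j : Fin n) (ω : ℂ) :
    ip (fe i j ω) A = 2 * (star ω * (A : Matrix (Fin n) (Fin n) ℂ) i j).re := by
  have hA : (A : Matrix (Fin n) (Fin n) ℂ) j i = star ((A : Matrix (Fin n) (Fin n) ℂ) i j) := by
    have h := congrFun (congrFun A.2 j) i
    rw [Matrix.star_apply] at h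
    exact h.symm
  rw [ip_def, coe_fe, Matrix.add_mul, Matrix.trace_add, Matrix.trace_single_mul,
    Matrix.trace_single_mul, hA]
  simp
  ring

/-- The matrices `fe i j ω` form a tight frame. -/
lemma frame : A = (1 / 4 : ℝ) • ∑ t, ∑ i, ∑ j, ip (fe i j (ph t)) A • fe i j (ph t) := by
  apply Subtype.ext
  have hA : ∀ i j, (A : Matrix (Fin n) (Fin n) ℂ) j i =
      star ((A : Matrix (Fin n) (Fin n) ℂ) i j) := by
    intro i j
    have h := congrFun (congrFun A.2 j) i
    rw [Matrix.star_apply] at h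
    exact h.symm
  ext a b
  have h1 : ∀ (c : Fin n → Fin n → ℝ) (ω : ℂ),
      ((∑ i, ∑ j, c i j • fe i j ω : selfAdjoint (Matrix (Fin n) (Fin n) ℂ)) :
        Matrix (Fin n) (Fin n) ℂ) a b = c a b * ω + c b a * star ω := by
    intro c ω
    simp only [AddSubgroup.val_finsetSum, selfAdjoint.val_smul, coe_fe, Matrix.sum_apply,
      Matrix.smul_apply, Matrix.add_apply, Matrix.single_apply, smul_add, Finset.sum_add_distrib,
      ite_and, smul_ite, smul_zero]
    congr 1
    · rw [Finset.sum_eq_single a (fun i _ hi => by simp [hi]) (by simp)]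
      simp
    · rw [Finset.sum_eq_single b (fun i _ hi => by simp [hi]) (by simp)]
      simp
  rw [selfAdjoint.val_smul, Fintype.sum_bool, AddSubgroup.coe_add, Matrix.smul_apply,
    Matrix.add_apply, h1 (fun i j => ip (fe i j (ph true)) A),
    h1 (fun i j => ip (fe i j (ph false)) A)]
  simp only [ip_fe, hA a b, ph]
  apply Complex.ext <;> simp <;> ring

end Frame

/-! ### Tensor norms -/

section Tensor
variable {n : ℕ}

/-- The set of costs of representations of `z`, whose infimum is `projSch`. -/
def costs (p : ℝ) (z : TensorProduct ℝ (selfAdjoint (Matrix (Fin n) (Fin n) ℂ))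
    (selfAdjoint (Matrix (Fin n) (Fin n) ℂ))) : Set ℝ :=
  { r : ℝ | ∃ (k : ℕ) (a b : Fin k → selfAdjoint (Matrix (Fin n) (Fin n) ℂ)),
    z = ∑ i, a i ⊗ₜ[ℝ] b i ∧ r = ∑ i, schNorm p (a i) * schNorm p (b i) }

variable (p : ℝ) (z w : TensorProduct ℝ (selfAdjoint (Matrix (Fin n) (Fin n) ℂ))
    (selfAdjoint (Matrix (Fin n) (Fin n) ℂ)))

lemma projSch_eq : projSch p z = sInf (costs p z) := rfl

lemma costs_nonneg {r : ℝ} (h : r ∈ costs p z) : 0 ≤ r := by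
  obtain ⟨k, a, b, -, rfl⟩ := h
  exact Finset.sum_nonneg fun i _ => mul_nonneg (schNorm_nonneg _ _) (schNorm_nonneg _ _)

lemma costs_bddBelow : BddBelow (costs p z) := ⟨0, fun _ h => costs_nonneg p z h⟩

lemma costs_add {r t : ℝ} (hr : r ∈ costs p z) (ht : t ∈ costs p w) :
    r + t ∈ costs p (z + w) := by
  obtain ⟨k, a, b, rfl, rfl⟩ := hr
  obtain ⟨l, c, d, rfl, rfl⟩ := ht
  refine ⟨k + l, Fin.append a c, Fin.append b d, ?_, ?_⟩ <;>
  · rw [Fin.sum_univ_add]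
    simp

lemma costs_tmul (x y : selfAdjoint (Matrix (Fin n) (Fin n) ℂ)) :
    schNorm p x * schNorm p y ∈ costs p (x ⊗ₜ[ℝ] y) :=
  ⟨1, fun _ => x, fun _ => y, by simp, by simp⟩

lemma costs_nonempty : (costs p z).Nonempty := by
  induction z using TensorProduct.induction_on with
  | zero => exact ⟨0, 0, Fin.elim0, Fin.elim0, by simp, by simp⟩
  | tmul x y => exact ⟨_, costs_tmul p x y⟩
  | add x y hx hy =>
    obtain ⟨r, hr⟩ := hx
    obtain ⟨t, ht⟩ := hy
    exact ⟨_, costs_add p x y hr ht⟩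

lemma projSch_nonneg : 0 ≤ projSch p z :=
  Real.sInf_nonneg fun _ h => costs_nonneg p z h

lemma projSch_add : projSch p (z + w) ≤ projSch p z + projSch p w := by
  have h1 : projSch p (z + w) - projSch p z ≤ sInf (costs p w) := by
    refine le_csInf (costs_nonempty p w) fun t ht => ?_
    have h2 : projSch p (z + w) - t ≤ sInf (costs p z) := by
      refine le_csInf (costs_nonempty p z) fun r hr => ?_
      have h3 : projSch p (z + w) ≤ r + t :=
        csInf_le (costs_bddBelow p _) (costs_add p z w hr ht)
      linarith
    rw [← projSch_eq] at h2
    linarith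
  rw [← projSch_eq] at h1
  linarith

lemma costs_smul {p : ℝ} (hp : 0 < p) {c : ℝ} (hc : 0 < c) {r : ℝ} (hr : r ∈ costs p z) :
    c * r ∈ costs p (c • z) := by
  obtain ⟨k, a, b, rfl, rfl⟩ := hr
  refine ⟨k, fun i => c • a i, b, ?_, ?_⟩
  · simp [Finset.smul_sum, TensorProduct.smul_tmul']
  · simp [Finset.mul_sum, schNorm_smul _ hp, abs_of_pos hc, mul_assoc]

lemma projSch_smul_le {p : ℝ} (hp : 0 < p) {c : ℝ} (hc : 0 < c) :
    projSch p (c • z) ≤ c * projSch p z := by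
  rw [← div_le_iff₀' hc, projSch_eq p z]
  refine le_csInf (costs_nonempty p z) fun r hr => ?_
  rw [div_le_iff₀' hc]
  exact csInf_le (costs_bddBelow p _) (costs_smul z hp hc hr)

lemma projSch_smul {p : ℝ} (hp : 0 < p) {c : ℝ} (hc : 0 < c) :
    projSch p (c • z) = c * projSch p z := by
  refine le_antisymm (projSch_smul_le z hp hc) ?_
  have h := projSch_smul_le (c • z) hp (inv_pos.2 hc)
  rw [smul_smul, inv_mul_cancel₀ hc.ne', one_smul] at h
  rwa [← le_inv_mul_iff₀ hc]

/-- Hahn–Banach: the projective norm of `z` is attained by a bilinear form of norm at most one. -/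
lemma exists_form {p : ℝ} (hp : 0 < p) :
    ∃ v : TensorProduct ℝ (selfAdjoint (Matrix (Fin n) (Fin n) ℂ))
      (selfAdjoint (Matrix (Fin n) (Fin n) ℂ)) →ₗ[ℝ] ℝ,
      v z = projSch p z ∧ ∀ x y, v (x ⊗ₜ[ℝ] y) ≤ schNorm p x * schNorm p y := by
  have hb : ∀ v : TensorProduct ℝ (selfAdjoint (Matrix (Fin n) (Fin n) ℂ))
      (selfAdjoint (Matrix (Fin n) (Fin n) ℂ)) →ₗ[ℝ] ℝ, (∀ u, v u ≤ projSch p u) →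
      ∀ x y, v (x ⊗ₜ[ℝ] y) ≤ schNorm p x * schNorm p y := fun v hv x y =>
    (hv _).trans (csInf_le (costs_bddBelow p _) (costs_tmul p x y))
  have h00 : projSch p (0 : TensorProduct ℝ (selfAdjoint (Matrix (Fin n) (Fin n) ℂ))
      (selfAdjoint (Matrix (Fin n) (Fin n) ℂ))) = 0 := by
    have h := projSch_smul (0 : TensorProduct ℝ (selfAdjoint (Matrix (Fin n) (Fin n) ℂ))
      (selfAdjoint (Matrix (Fin n) (Fin n) ℂ))) hp (c := 2) (by norm_num)
    rw [smul_zero] at h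
    linarith
  by_cases hz : z = 0
  · refine ⟨0, ?_, hb 0 fun u => projSch_nonneg p u⟩
    rw [hz, h00]; simp
  have hwd : ∀ c : ℝ, c • z = 0 → c • projSch p z = 0 := fun c hc => by
    rw [(smul_eq_zero.1 hc).resolve_right hz, zero_smul]
  obtain ⟨v, hv1, hv2⟩ := exists_extension_of_le_sublinear
    (LinearPMap.mkSpanSingleton' z (projSch p z) hwd) (projSch p)
    (fun c hc x => projSch_smul x hp hc) (projSch_add p) (by
      rintro ⟨x, hx⟩
      obtain ⟨c, rfl⟩ := Submodule.mem_span_singleton.1 hx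
      rw [LinearPMap.mkSpanSingleton'_apply]
      simp only [RingHom.id_apply, smul_eq_mul]
      rcases lt_trichotomy c 0 with hc | hc | hc
      · exact (mul_nonpos_of_nonpos_of_nonneg hc.le (projSch_nonneg p z)).trans
          (projSch_nonneg p _)
      · rw [hc, zero_mul]; exact projSch_nonneg p _
      · exact (projSch_smul z hp hc).ge)
  refine ⟨v, ?_, hb v hv2⟩
  exact (hv1 ⟨z, Submodule.mem_span_singleton_self z⟩).trans
    (LinearPMap.mkSpanSingleton'_apply_self _ _ _ _)

lemma abs_le_injSch {φ ψ : selfAdjoint (Matrix (Fin n) (Fin n) ℂ) →ₗ[ℝ] ℝ}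
    (hφ : ∀ x, |φ x| ≤ schNorm p x) (hψ : ∀ y, |ψ y| ≤ schNorm p y) :
    |TensorProduct.lid ℝ ℝ (TensorProduct.map φ ψ z)| ≤ injSch p z := by
  obtain ⟨r, hr⟩ := costs_nonempty p z
  obtain ⟨k, a, b, hz, hrr⟩ := hr
  refine le_csSup ⟨r, ?_⟩ ⟨φ, ψ, hφ, hψ, rfl⟩
  rintro _ ⟨φ, ψ, hφ, hψ, rfl⟩
  rw [hz, hrr, map_sum, map_sum]
  refine (Finset.abs_sum_le_sum_abs _ _).trans (Finset.sum_le_sum fun i _ => ?_)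
  rw [TensorProduct.map_tmul, TensorProduct.lid_tmul, smul_eq_mul, abs_mul]
  exact mul_le_mul (hφ _) (hψ _) (abs_nonneg _) (schNorm_nonneg _ _)

/-- The bilinear form `(X, Y) ↦ (tr (X ·) ⊗ tr (Y ·))(z)`. -/
noncomputable def tt : selfAdjoint (Matrix (Fin n) (Fin n) ℂ) →ₗ[ℝ]
    selfAdjoint (Matrix (Fin n) (Fin n) ℂ) →ₗ[ℝ] ℝ :=
  LinearMap.mk₂ ℝ (fun X Y => TensorProduct.lid ℝ ℝ (TensorProduct.map (ip X) (ip Y) z))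
    (by intros; simp [TensorProduct.map_add_left]) (by intros; simp [TensorProduct.map_smul_left])
    (by intros; simp [TensorProduct.map_add_right])
    (by intros; simp [TensorProduct.map_smul_right])

lemma tt_apply (X Y : selfAdjoint (Matrix (Fin n) (Fin n) ℂ)) :
    tt z X Y = TensorProduct.lid ℝ ℝ (TensorProduct.map (ip X) (ip Y) z) := rfl

/-- By Hölder's inequality, `tr (X ·)` is `‖X‖_r` times an element of the dual unit ball of `S_q`,
which makes the injective norm control `tt z`. -/
lemma abs_tt_le {r q : ℝ} (h : r.HolderConjugate q)
    (X Y : selfAdjoint (Matrix (Fin n) (Fin n) ℂ)) :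
    |tt z X Y| ≤ schNorm r X * schNorm r Y * injSch q z := by
  -- a matrix of norm zero pairs to zero with everything, so its functional need not be normalised
  have hz0 : ∀ X : selfAdjoint (Matrix (Fin n) (Fin n) ℂ), schNorm r X = 0 → ip X = 0 := by
    intro X hX
    ext Y
    have := abs_ip_le X Y h
    rw [hX, zero_mul] at this
    simpa using this
  have hn : ∀ X : selfAdjoint (Matrix (Fin n) (Fin n) ℂ), schNorm r X ≠ 0 →
      ∀ x, |ip ((schNorm r X)⁻¹ • X) x| ≤ schNorm q x := by
    intro X hX x
    refine (abs_ip_le _ _ h).trans ?_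
    rw [schNorm_smul _ h.pos, abs_inv, abs_of_nonneg (schNorm_nonneg _ _), inv_mul_cancel₀ hX,
      one_mul]
  by_cases hX : schNorm r X = 0
  · rw [tt_apply, hz0 X hX, hX]; simp
  by_cases hY : schNorm r Y = 0
  · rw [tt_apply, hz0 Y hY, hY]; simp
  have := abs_le_injSch q z (hn X hX) (hn Y hY)
  rw [← tt_apply, map_smul, map_smul, LinearMap.smul_apply, smul_eq_mul, smul_eq_mul, abs_mul,
    abs_mul, abs_inv, abs_inv, abs_of_nonneg (schNorm_nonneg X r),
    abs_of_nonneg (schNorm_nonneg Y r)] at this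
  have hX' : 0 < schNorm r X := lt_of_le_of_ne (schNorm_nonneg _ _) (Ne.symm hX)
  have hY' : 0 < schNorm r Y := lt_of_le_of_ne (schNorm_nonneg _ _) (Ne.symm hY)
  rw [inv_mul_le_iff₀ hY', inv_mul_le_iff₀ hX'] at this
  linarith

/-- The matrix representing a functional through `tr (· ·)`. -/
noncomputable def riesz : (selfAdjoint (Matrix (Fin n) (Fin n) ℂ) →ₗ[ℝ] ℝ) →ₗ[ℝ]
    selfAdjoint (Matrix (Fin n) (Fin n) ℂ) :=
  (1 / 4 : ℝ) • ∑ t, ∑ i, ∑ j,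
    (LinearMap.applyₗ (fe i j (ph t))).smulRight (fe i j (ph t))

lemma ip_riesz (φ : selfAdjoint (Matrix (Fin n) (Fin n) ℂ) →ₗ[ℝ] ℝ)
    (A : selfAdjoint (Matrix (Fin n) (Fin n) ℂ)) : ip (riesz φ) A = φ A := by
  conv_rhs => rw [frame A]
  simp only [riesz, LinearMap.smul_apply, LinearMap.sum_apply, LinearMap.smulRight_apply,
    LinearMap.applyₗ_apply_apply, map_smul, map_sum, smul_eq_mul]
  congr 1
  refine Finset.sum_congr rfl fun t _ => Finset.sum_congr rfl fun i _ =>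
    Finset.sum_congr rfl fun j _ => mul_comm _ _

/-- The operator associated with a bilinear form `v`, characterised by
`tr (opv v A · B) = v (A ⊗ B)`. -/
noncomputable def opv (v : TensorProduct ℝ (selfAdjoint (Matrix (Fin n) (Fin n) ℂ))
      (selfAdjoint (Matrix (Fin n) (Fin n) ℂ)) →ₗ[ℝ] ℝ) :
    selfAdjoint (Matrix (Fin n) (Fin n) ℂ) →ₗ[ℝ] selfAdjoint (Matrix (Fin n) (Fin n) ℂ) :=
  riesz ∘ₗ TensorProduct.curry v

lemma ip_opv (v : TensorProduct ℝ (selfAdjoint (Matrix (Fin n) (Fin n) ℂ))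
      (selfAdjoint (Matrix (Fin n) (Fin n) ℂ)) →ₗ[ℝ] ℝ)
    (A B : selfAdjoint (Matrix (Fin n) (Fin n) ℂ)) : ip (opv v A) B = v (A ⊗ₜ[ℝ] B) := by
  rw [opv, LinearMap.comp_apply, ip_riesz, TensorProduct.curry_apply]

/-- Trace duality: the tight frame expands the pairing of `v` with `z` as the trace of a composition
of operators. -/
lemma apply_eq_sum_tt (v : TensorProduct ℝ (selfAdjoint (Matrix (Fin n) (Fin n) ℂ))
      (selfAdjoint (Matrix (Fin n) (Fin n) ℂ)) →ₗ[ℝ] ℝ) :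
    v z = 1 / 4 * ∑ t, ∑ i, ∑ j, tt z (fe i j (ph t)) (opv v (fe i j (ph t))) := by
  induction z using TensorProduct.induction_on with
  | zero => simp [tt_apply]
  | tmul x y =>
    simp only [tt_apply, TensorProduct.map_tmul, TensorProduct.lid_tmul, ip_opv, smul_eq_mul]
    change ((TensorProduct.curry v).flip y) x = _
    conv_lhs => rw [frame x]
    simp only [map_smul, map_sum, smul_eq_mul, LinearMap.flip_apply, TensorProduct.curry_apply]
  | add x y hx hy =>
    rw [map_add, hx, hy]
    simp only [tt_apply, map_add, Finset.sum_add_distrib]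
    ring

lemma map_rad {ι V W : Type} [Fintype ι] [AddCommGroup V] [Module ℝ V] [AddCommGroup W]
    [Module ℝ W] (f : V →ₗ[ℝ] W) (y : ι → V) (ε : ι → ℤˣ) :
    f (rad y ε) = rad (fun i => f (y i)) ε := by
  simp [rad]

/-- Orthogonality of the signs: averaging over `ε` extracts the diagonal terms. -/
lemma sum_rad_rad {ι : Type} [Fintype ι] [DecidableEq ι] {V : Type} [AddCommGroup V] [Module ℝ V]
    (a : V →ₗ[ℝ] V →ₗ[ℝ] ℝ) (x y : ι → V) :
    ∑ ε : ι → ℤˣ, a (rad x ε) (rad y ε) =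
      ((Fintype.card (ι → ℤˣ) : ℕ) : ℝ) * ∑ i, a (x i) (y i) := by
  have h : ∀ i j, ∑ ε : ι → ℤˣ, ((ε i : ℤ) : ℝ) * ((ε j : ℤ) : ℝ) =
      if i = j then ((Fintype.card (ι → ℤˣ) : ℕ) : ℝ) else 0 := by
    intro i j
    split_ifs with hij
    · subst hij
      simp_rw [sgn_sq]
      simp
    · have h1 := sum_flip i (fun ε : ι → ℤˣ => ((ε i : ℤ) : ℝ) * ((ε j : ℤ) : ℝ))
      have h2 : ∀ ε : ι → ℤˣ, ((((ε * (Pi.mulSingle i (-1) : ι → ℤˣ)) i : ℤˣ) : ℤ) : ℝ) *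
          ((((ε * (Pi.mulSingle i (-1) : ι → ℤˣ)) j : ℤˣ) : ℤ) : ℝ) =
          - (((ε i : ℤ) : ℝ) * ((ε j : ℤ) : ℝ)) := by
        intro ε
        simp [Pi.mulSingle_eq_of_ne (Ne.symm hij)]
      simp only [h2, Finset.sum_neg_distrib] at h1
      linarith
  calc ∑ ε : ι → ℤˣ, a (rad x ε) (rad y ε)
      = ∑ ε : ι → ℤˣ, ∑ i, ∑ j, ((ε i : ℤ) : ℝ) * ((ε j : ℤ) : ℝ) * a (x i) (y j) := by
        refine Finset.sum_congr rfl fun ε _ => ?_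
        simp only [rad, map_sum, LinearMap.sum_apply, map_smul, LinearMap.smul_apply, smul_eq_mul,
          Finset.mul_sum]
        rw [Finset.sum_comm]
        refine Finset.sum_congr rfl fun i _ => Finset.sum_congr rfl fun j _ => ?_
        ring
    _ = ∑ i, ∑ j, (∑ ε : ι → ℤˣ, ((ε i : ℤ) : ℝ) * ((ε j : ℤ) : ℝ)) * a (x i) (y j) := by
        rw [Finset.sum_comm]
        refine Finset.sum_congr rfl fun i _ => ?_
        rw [Finset.sum_comm]
        simp_rw [Finset.sum_mul]
    _ = _ := by
        simp [h, Finset.mul_sum]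

/-- The contribution to `v z` of the matrices `fe i (σ i) ω` along the graph of a permutation. It is
the average over signs of `tt z X (opv v X)`, where `X` is the signed sum of these matrices; `X` is
small in `S_r` by its row sums and `opv v X` is small on average because `S_r` has type `2`. -/
lemma diag_sum_le {s : ℝ} (hs : 0 < s) (hz : injSch ((s + 2) / (s + 1)) z ≤ 1)
    (v : TensorProduct ℝ (selfAdjoint (Matrix (Fin n) (Fin n) ℂ))
      (selfAdjoint (Matrix (Fin n) (Fin n) ℂ)) →ₗ[ℝ] ℝ)
    (hv : ∀ x y, v (x ⊗ₜ[ℝ] y) ≤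
      schNorm ((s + 2) / (s + 1)) x * schNorm ((s + 2) / (s + 1)) y)
    {ω : ℂ} (hω : ‖ω‖ = 1) (σ : Equiv.Perm (Fin n)) :
    ∑ i, tt z (fe i (σ i) ω) (opv v (fe i (σ i) ω)) ≤
      2 * (n : ℝ) ^ (1 / (s + 2)) * (Real.sqrt (2 * (s + 1) * n) * 4) := by
  have hconj : (s + 2).HolderConjugate ((s + 2) / (s + 1)) := by
    rw [Real.holderConjugate_iff]
    refine ⟨by linarith, ?_⟩
    field_simp
    ring
  have hq : 1 ≤ (s + 2) / (s + 1) := hconj.symm.lt.le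
  set x := fun i => fe i (σ i) ω with hx
  set M : ℝ := ((Fintype.card (Fin n → ℤˣ) : ℕ) : ℝ) with hM
  have hM0 : 0 < M := by rw [hM]; exact_mod_cast Fintype.card_pos
  have hR : ∀ A, schNorm (s + 2) (opv v A) ≤ schNorm ((s + 2) / (s + 1)) A := fun A =>
    schNorm_le_of_ip_le _ hs (schNorm_nonneg _ _) fun B => by rw [ip_opv]; exact hv A B
  have hpw : ∀ i, pw (s + 2) (opv v (x i)) ≤ 4 ^ (s + 2) := by
    intro i
    have h1 : schNorm (s + 2) (opv v (x i)) ≤ 4 := (hR _).trans (schNorm_fe_le hω _ _ hq)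
    have h2 := Real.rpow_le_rpow (schNorm_nonneg _ _) h1 (by linarith : 0 ≤ s + 2)
    rwa [schNorm_eq, ← Real.rpow_mul (pw_nonneg _ _), one_div_mul_cancel (by positivity),
      Real.rpow_one] at h2
  have h2 := type_two hs (by norm_num : (0 : ℝ) < 4) (fun i => opv v (x i)) hpw
  rw [Fintype.card_fin] at h2
  have hav : (∑ ε : Fin n → ℤˣ, schNorm (s + 2) (rad (fun i => opv v (x i)) ε)) / M ≤
      Real.sqrt (2 * (s + 1) * n) * 4 := by
    have h3 := Real.arith_mean_le_rpow_mean Finset.univ (fun _ : Fin n → ℤˣ => 1 / M)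
      (fun ε => schNorm (s + 2) (rad (fun i => opv v (x i)) ε)) (fun _ _ => by positivity)
      (by rw [Finset.sum_const, Finset.card_univ, nsmul_eq_mul, ← hM]; field_simp)
      (fun _ _ => schNorm_nonneg _ _) (p := s + 2) (by linarith)
    have h4 : ∀ A : selfAdjoint (Matrix (Fin n) (Fin n) ℂ),
        schNorm (s + 2) A ^ (s + 2) = pw (s + 2) A := by
      intro A
      rw [schNorm_eq, ← Real.rpow_mul (pw_nonneg _ _), one_div_mul_cancel (by positivity),
        Real.rpow_one]
    simp only [h4, one_div_mul_eq_div, ← Finset.sum_div] at h3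
    refine h3.trans ?_
    refine (Real.rpow_le_rpow (div_nonneg (Finset.sum_nonneg fun _ _ => pw_nonneg _ _) hM0.le)
      h2 (by positivity)).trans ?_
    rw [← Real.rpow_mul (by positivity), mul_one_div_cancel (by positivity), Real.rpow_one]
  have h5 : M * ∑ i, tt z (x i) (opv v (x i)) ≤
      2 * (n : ℝ) ^ (1 / (s + 2)) *
        ∑ ε : Fin n → ℤˣ, schNorm (s + 2) (rad (fun i => opv v (x i)) ε) := by
    rw [hM, ← sum_rad_rad (tt z) x (fun i => opv v (x i)), Finset.mul_sum]
    refine Finset.sum_le_sum fun ε _ => (le_abs_self _).trans ((abs_tt_le z hconj _ _).trans ?_)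
    refine (mul_le_of_le_one_right (mul_nonneg (schNorm_nonneg _ _) (schNorm_nonneg _ _))
      hz).trans ?_
    exact mul_le_mul_of_nonneg_right (schNorm_rad_fe_le hω σ (by linarith) ε) (schNorm_nonneg _ _)
  rw [div_le_iff₀ hM0] at hav
  refine le_of_mul_le_mul_left (h5.trans ?_) hM0
  refine (mul_le_mul_of_nonneg_left hav (by positivity)).trans (le_of_eq ?_)
  ring

lemma projSch_le {s : ℝ} (hs : 0 < s) (hn : 1 ≤ n) (hz : injSch ((s + 2) / (s + 1)) z ≤ 1) :
    projSch ((s + 2) / (s + 1)) z ≤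
      4 * Real.sqrt (2 * (s + 1)) * (n : ℝ) ^ (3 / 2 + 1 / (s + 2)) := by
  have : NeZero n := ⟨by omega⟩
  obtain ⟨v, hvz, hv⟩ := exists_form z (p := (s + 2) / (s + 1)) (by positivity)
  rw [← hvz, apply_eq_sum_tt]
  -- the pairs `(i, j)` are partitioned into the graphs of the `n` cyclic shifts
  have h1 : ∀ t, ∑ i, ∑ j, tt z (fe i j (ph t)) (opv v (fe i j (ph t))) ≤
      n * (2 * (n : ℝ) ^ (1 / (s + 2)) * (Real.sqrt (2 * (s + 1) * n) * 4)) := by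
    intro t
    calc _ = ∑ i, ∑ k, tt z (fe i (i + k) (ph t)) (opv v (fe i (i + k) (ph t))) := by
          refine Finset.sum_congr rfl fun i _ => ?_
          exact (Equiv.sum_comp (Equiv.addLeft i)
            (fun j => tt z (fe i j (ph t)) (opv v (fe i j (ph t))))).symm
      _ = ∑ k, ∑ i, tt z (fe i (i + k) (ph t)) (opv v (fe i (i + k) (ph t))) := Finset.sum_comm
      _ ≤ ∑ _k : Fin n, (2 * (n : ℝ) ^ (1 / (s + 2)) * (Real.sqrt (2 * (s + 1) * n) * 4)) :=
          Finset.sum_le_sum fun k _ => diag_sum_le z hs hz v hv (norm_ph t) (Equiv.addRight k)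
      _ = _ := by rw [Finset.sum_const, Finset.card_univ, Fintype.card_fin, nsmul_eq_mul]
  have hn0 : (0 : ℝ) < n := by exact_mod_cast hn
  have h2 : (n : ℝ) ^ (3 / 2 + 1 / (s + 2)) = n * (n : ℝ) ^ (1 / (s + 2)) * Real.sqrt n := by
    rw [Real.sqrt_eq_rpow, show (3 / 2 + 1 / (s + 2) : ℝ) = 1 + 1 / (s + 2) + 1 / 2 by ring,
      Real.rpow_add hn0, Real.rpow_add hn0, Real.rpow_one]
  rw [h2, Fintype.sum_bool]
  have h3 : Real.sqrt (2 * (s + 1) * n) = Real.sqrt (2 * (s + 1)) * Real.sqrt n :=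
    Real.sqrt_mul (by positivity) _
  have := h1 true
  have := h1 false
  rw [h3] at *
  nlinarith

end Tensor

/-- For every `p > 1` there is `K > 0`, independent of `n`, with
`ρ(S_q^{n,sa}, S_q^{n,sa}) ≤ K·n^{3/2 + 1/(2p)}`, where `q = 2p/(2p−1)`. -/
theorem statement14 (p : ℝ) (hp : 1 < p) :
    ∃ K > (0:ℝ), ∀ n : ℕ, 1 ≤ n →
      rhoSch (2*p/(2*p - 1)) n ≤ K * (n : ℝ) ^ (3/2 + 1/(2*p)) := by
  refine ⟨4 * Real.sqrt (2 * (2 * p - 2 + 1)),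
    mul_pos (by norm_num) (Real.sqrt_pos.2 (by linarith)), fun n hn => ?_⟩
  refine Real.sSup_le ?_ (by positivity)
  rintro _ ⟨z, hz, rfl⟩
  have e1 : (2 * p - 2 + 2) / (2 * p - 2 + 1) = 2 * p / (2 * p - 1) := by ring_nf
  have h := projSch_le z (s := 2 * p - 2) (by linarith) hn (by rw [e1]; exact hz)
  rw [e1, show 2 * p - 2 + 2 = 2 * p by ring] at h
  exact h
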